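/- For all 1 ≤ l < k ≤ n and every point p = (x, x̂, A) ∈ Ω with x ∈ S^n (i.e. Σ_{r=0}^n x_r² = 1), the Lie bracket of the rolling vector fields satisfies [X_k, X_l](p) = (x_{l−1} / √(s_{l−1}(x) s_l(x))) · X_k(p) − (0, 0, A(E_{lk} − E_{kl})). -/

import Mathlib

open scoped InnerProductSpace BigOperators

noncomputable section

/-- `s_j(x) = ∑_{r=j}^n x_r²`. -/
def sfun (n j : ℕ) (x : EuclideanSpace ℝ (Fin (n + 1))) : ℝ :=
  ∑ r : Fin (n + 1), if j ≤ (r : ℕ) then x r ^ 2 else 0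

/-- The `j`-th coordinate of `x` (read as a natural-number index, `0` out of range). -/
def coordfun (n : ℕ) (x : EuclideanSpace ℝ (Fin (n + 1))) (j : ℕ) : ℝ :=
  if h : j < n + 1 then x ⟨j, h⟩ else 0

/-- The vector field `e_j(x) = √(s_j/s_{j-1}) ( −∂_{j−1} + (x_{j−1}/s_j) Σ_{r=j}^n x_r ∂_r )`. -/
def efun (n j : ℕ) (x : EuclideanSpace ℝ (Fin (n + 1))) : EuclideanSpace ℝ (Fin (n + 1)) :=
  WithLp.toLp 2 fun r => Real.sqrt (sfun n j x / sfun n (j - 1) x) *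
    (-(if (r : ℕ) = j - 1 then 1 else 0)
      + coordfun n x (j - 1) / sfun n j x * (if j ≤ (r : ℕ) then x r else 0))

/-- `U = {x ∈ ℝ^{n+1} : x_n > 0}`. -/
def Usph (n : ℕ) : Set (EuclideanSpace ℝ (Fin (n + 1))) := {x | 0 < coordfun n x n}

/-- The unit sphere `S^n ⊂ ℝ^{n+1}`. -/
def sph (n : ℕ) : Set (EuclideanSpace ℝ (Fin (n + 1))) :=
  {x | ∑ r : Fin (n + 1), x r ^ 2 = 1}

attribute [local instance] Matrix.normedAddCommGroup Matrix.normedSpace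

/-- The ambient space of the trivialized configuration space
`Ω = U × ℝ^n × M_n(ℝ) ⊂ ℝ^{n+1} × ℝ^n × M_n(ℝ)`. -/
abbrev Conf (n : ℕ) :=
  EuclideanSpace ℝ (Fin (n + 1)) × EuclideanSpace ℝ (Fin n) × Matrix (Fin n) (Fin n) ℝ

/-- The elementary matrix `E_{ik}` with `1`-based indices `i, k`. -/
def Emat (n i k : ℕ) : Matrix (Fin n) (Fin n) ℝ :=
  Matrix.of fun a b => if (a : ℕ) + 1 = i ∧ (b : ℕ) + 1 = k then 1 else 0

/-- The standard basis vector `ε_k` of `ℝ^n`, with a `1`-based index `k`. -/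
def eps (n k : ℕ) : EuclideanSpace ℝ (Fin n) :=
  WithLp.toLp 2 fun i => if (i : ℕ) + 1 = k then 1 else 0

/-- The rolling vector field
`X_k(x, x̂, A) = (e_k(x), A ε_k, −Σ_{i=1}^{k−1} (x_{i−1}/√(s_{i−1} s_i)) A (E_{ik} − E_{ki}))`. -/
def Xfield (n k : ℕ) : Conf n → Conf n := fun p =>
  (efun n k p.1, WithLp.toLp 2 (p.2.2.mulVec (eps n k).ofLp),
    -∑ i ∈ Finset.Icc 1 (k - 1),
      (coordfun n p.1 (i - 1) / Real.sqrt (sfun n (i - 1) p.1 * sfun n i p.1)) •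
        (p.2.2 * (Emat n i k - Emat n k i)))

/-- `Y_{lk}(x, x̂, A) = (0, 0, A(E_{lk} − E_{kl}))`. -/
def Yfield (n l k : ℕ) : Conf n → Conf n := fun p =>
  (0, 0, p.2.2 * (Emat n l k - Emat n k l))

/-- `Z_k(x, x̂, A) = (0, A ε_k, 0)`. -/
def Zfield (n k : ℕ) : Conf n → Conf n := fun p =>
  (0, WithLp.toLp 2 (p.2.2.mulVec (eps n k).ofLp), 0)

/-- The coefficient `x_i / √(s_i s_{i+1})`. -/
def cfun (n i : ℕ) (x : EuclideanSpace ℝ (Fin (n + 1))) : ℝ :=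
  coordfun n x i / Real.sqrt (sfun n i x * sfun n (i + 1) x)

theorem sfun_nonneg (n j : ℕ) (x : EuclideanSpace ℝ (Fin (n + 1))) : 0 ≤ sfun n j x :=
  Finset.sum_nonneg fun r _ => by split_ifs <;> positivity

theorem sfun_pos {n j : ℕ} (hj : j ≤ n) {x : EuclideanSpace ℝ (Fin (n + 1))}
    (hx : x ∈ Usph n) : 0 < sfun n j x := by
  have hx' : 0 < x (Fin.last n) := by
    simpa [Usph, coordfun, Fin.last] using hx
  refine Finset.sum_pos' (fun r _ => by split_ifs <;> positivity) ⟨Fin.last n, by simp, ?_⟩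
  simp only [Fin.val_last, hj, if_true]
  positivity

theorem sfun_eq_add {n j : ℕ} (hj : j ≤ n) (x : EuclideanSpace ℝ (Fin (n + 1))) :
    sfun n j x = coordfun n x j ^ 2 + sfun n (j + 1) x := by
  have h : coordfun n x j ^ 2 = ∑ r : Fin (n + 1), if (r : ℕ) = j then x r ^ 2 else 0 := by
    rw [Finset.sum_eq_single ⟨j, by omega⟩]
    · simp [coordfun, Nat.lt_succ_of_le hj]
    · intro b _ hb
      rw [if_neg fun h => hb (Fin.ext h)]
    · simp
  rw [h, sfun, sfun, ← Finset.sum_add_distrib]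
  refine Finset.sum_congr rfl fun r _ => ?_
  rcases lt_trichotomy (r : ℕ) j with h | h | h
  · simp [h.ne, h.not_ge, show ¬ j + 1 ≤ (r : ℕ) by omega]
  · simp [h]
  · simp [h.ne', h.le, show j + 1 ≤ (r : ℕ) by omega]

theorem coordfun_fin {n : ℕ} (x : EuclideanSpace ℝ (Fin (n + 1))) (r : Fin (n + 1)) :
    coordfun n x r = x r := by
  rw [coordfun, dif_pos r.isLt]

theorem efun_apply (n j : ℕ) (x : EuclideanSpace ℝ (Fin (n + 1))) (r : Fin (n + 1)) :
    efun n (j + 1) x r = if (r : ℕ) = j then -Real.sqrt (sfun n (j + 1) x / sfun n j x)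
      else if j < (r : ℕ) then cfun n j x * x r else 0 := by
  have key : Real.sqrt (sfun n (j + 1) x / sfun n j x) * (coordfun n x j / sfun n (j + 1) x)
      = cfun n j x := by
    rw [cfun, Real.sqrt_div (sfun_nonneg _ _ _), Real.sqrt_mul (sfun_nonneg _ _ _)]
    have := Real.sqrt_div_self' (x := sfun n (j + 1) x)
    calc _ = coordfun n x j / √(sfun n j x) * (√(sfun n (j + 1) x) / sfun n (j + 1) x) := by ring
      _ = _ := by rw [this]; simp only [div_eq_mul_inv, mul_inv]; ring
  simp only [efun, add_tsub_cancel_right, Nat.succ_le_iff, ← key]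
  split_ifs <;> first | omega | ring

theorem sq_cfun {n i : ℕ} (hi : i < n) {x : EuclideanSpace ℝ (Fin (n + 1))}
    (hx : x ∈ Usph n) : cfun n i x ^ 2 = 1 / sfun n (i + 1) x - 1 / sfun n i x := by
  have h0 := sfun_pos hi.le hx
  have h1 := sfun_pos (Nat.succ_le_of_lt hi) hx
  have h := sfun_eq_add hi.le x
  rw [cfun, div_pow, Real.sq_sqrt (by positivity)]
  field_simp
  linarith

theorem sum_sq_cfun {n l : ℕ} (hl : l ≤ n) {x : EuclideanSpace ℝ (Fin (n + 1))}
    (hx : x ∈ Usph n) :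
    ∑ i ∈ Finset.range l, cfun n i x ^ 2 = 1 / sfun n l x - 1 / sfun n 0 x := by
  rw [← Finset.sum_range_sub (fun i => 1 / sfun n i x)]
  exact Finset.sum_congr rfl fun i hi => sq_cfun (by grind) hx

theorem hasLineDerivAt_apply {n : ℕ} (x v : EuclideanSpace ℝ (Fin (n + 1))) (r : Fin (n + 1)) :
    HasLineDerivAt ℝ (fun y : EuclideanSpace ℝ (Fin (n + 1)) => y r) (v r) x v := by
  simpa [HasLineDerivAt] using ((hasDerivAt_id (0 : ℝ)).mul_const (v r)).const_add (x r)

theorem hasLineDerivAt_sfun {n : ℕ} (m : ℕ) (x v : EuclideanSpace ℝ (Fin (n + 1))) :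
    HasLineDerivAt ℝ (sfun n m)
      (∑ r : Fin (n + 1), if m ≤ (r : ℕ) then 2 * x r * v r else 0) x v := by
  refine HasDerivAt.fun_sum fun r _ => ?_
  split_ifs
  · simpa using (hasLineDerivAt_apply x v r).fun_pow 2
  · exact hasDerivAt_const _ _

/-- `e_{j+1}(s_m) = 0` for `m ≤ j`. -/
theorem hasLineDerivAt_sfun_efun_of_le {n j m : ℕ} (hj : j < n) (hm : m ≤ j)
    {x : EuclideanSpace ℝ (Fin (n + 1))} (hx : x ∈ Usph n) :
    HasLineDerivAt ℝ (sfun n m) 0 x (efun n (j + 1) x) := by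
  have h0 := sfun_pos hj.le hx
  have h1 := sfun_pos (Nat.succ_le_of_lt hj) hx
  convert hasLineDerivAt_sfun m x (efun n (j + 1) x) using 1
  have hterm : ∀ r : Fin (n + 1), (if m ≤ (r : ℕ) then 2 * x r * efun n (j + 1) x r else 0)
      = (if r = ⟨j, by omega⟩ then
          -(2 * coordfun n x j * Real.sqrt (sfun n (j + 1) x / sfun n j x)) else 0)
        + 2 * cfun n j x * (if j + 1 ≤ (r : ℕ) then x r ^ 2 else 0) := by
    intro r
    rw [efun_apply]
    have hr := coordfun_fin x r
    simp only [Fin.ext_iff]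
    rcases lt_trichotomy (r : ℕ) j with h | h | h
    · simp [h.ne, h.not_gt, show ¬ j + 1 ≤ (r : ℕ) by omega]
    · rw [← hr]; simp [h, hm]
    · simp only [h.ne', h, hm.trans h.le, if_true, if_false, Nat.succ_le_of_lt h]; ring
  rw [Finset.sum_congr rfl fun r _ => hterm r, Finset.sum_add_distrib, ← Finset.mul_sum,
    ← sfun, Finset.sum_ite_eq' Finset.univ, if_pos (Finset.mem_univ _), cfun,
    Real.sqrt_div h1.le, Real.sqrt_mul h0.le]
  have := Real.sq_sqrt h1.le
  field_simp
  rw [this]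
  ring

/-- `e_{j+1}(s_m) = 2 c_j s_m` for `j < m`. -/
theorem hasLineDerivAt_sfun_efun_of_lt {n j m : ℕ} (hm : j < m)
    (x : EuclideanSpace ℝ (Fin (n + 1))) :
    HasLineDerivAt ℝ (sfun n m) (2 * cfun n j x * sfun n m x) x (efun n (j + 1) x) := by
  convert hasLineDerivAt_sfun m x (efun n (j + 1) x) using 1
  rw [sfun, Finset.mul_sum]
  refine Finset.sum_congr rfl fun r _ => ?_
  rw [efun_apply]
  split_ifs <;> first | omega | ring

theorem hasLineDerivAt_coordfun_efun {n j i : ℕ} (hi : i ≤ n)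
    (x : EuclideanSpace ℝ (Fin (n + 1))) :
    HasLineDerivAt ℝ (fun y => coordfun n y i)
      (if i = j then -Real.sqrt (sfun n (j + 1) x / sfun n j x)
        else if j < i then cfun n j x * coordfun n x i else 0) x (efun n (j + 1) x) := by
  have hi' : i < n + 1 := by omega
  have := hasLineDerivAt_apply x (efun n (j + 1) x) ⟨i, hi'⟩
  rw [efun_apply] at this
  simpa [coordfun, hi'] using this

theorem hasLineDerivAt_cfun {n i : ℕ} (hi : i < n) {x v : EuclideanSpace ℝ (Fin (n + 1))}
    (hx : x ∈ Usph n) {a b d : ℝ} (ha : HasLineDerivAt ℝ (fun y => coordfun n y i) a x v)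
    (hb : HasLineDerivAt ℝ (sfun n i) b x v) (hd : HasLineDerivAt ℝ (sfun n (i + 1)) d x v) :
    HasLineDerivAt ℝ (cfun n i) (a / Real.sqrt (sfun n i x * sfun n (i + 1) x)
      - cfun n i x * (b / sfun n i x + d / sfun n (i + 1) x) / 2) x v := by
  have h0 := sfun_pos hi.le hx
  have h1 := sfun_pos (Nat.succ_le_of_lt hi) hx
  have hq : 0 < sfun n i x * sfun n (i + 1) x := by positivity
  have hs := HasDerivAt.sqrt (HasDerivAt.fun_mul hb hd) (by simpa using hq.ne')
  have := HasDerivAt.fun_div ha hs (by simpa using (Real.sqrt_pos.2 hq).ne')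
  refine this.congr_deriv ?_
  simp only [zero_smul, add_zero, cfun]
  have hr := Real.sqrt_pos.2 hq
  have hr2 := Real.sq_sqrt hq.le
  set R := Real.sqrt (sfun n i x * sfun n (i + 1) x)
  generalize sfun n i x = S at *
  generalize sfun n (i + 1) x = T at *
  field_simp
  rw [hr2]
  ring

/-- `e_{k+1}(c_i) = 0` for `i < k`. -/
theorem hasLineDerivAt_cfun_efun_of_lt {n k i : ℕ} (hk : k < n) (hi : i < k)
    {x : EuclideanSpace ℝ (Fin (n + 1))} (hx : x ∈ Usph n) :
    HasLineDerivAt ℝ (cfun n i) 0 x (efun n (k + 1) x) := by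
  have := hasLineDerivAt_cfun (hi.trans hk) hx (hasLineDerivAt_coordfun_efun (by omega) x)
    (hasLineDerivAt_sfun_efun_of_le hk hi.le hx) (hasLineDerivAt_sfun_efun_of_le hk hi hx)
  simpa [hi.ne, hi.not_gt] using this

/-- `e_{l+1}(c_l) = -1 / s_{l+1}`. -/
theorem hasLineDerivAt_cfun_efun_self {n l : ℕ} (hl : l < n)
    {x : EuclideanSpace ℝ (Fin (n + 1))} (hx : x ∈ Usph n) :
    HasLineDerivAt ℝ (cfun n l) (-(1 / sfun n (l + 1) x)) x (efun n (l + 1) x) := by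
  have h0 := sfun_pos hl.le hx
  have h1 := sfun_pos (Nat.succ_le_of_lt hl) hx
  have := hasLineDerivAt_cfun hl hx (hasLineDerivAt_coordfun_efun hl.le x)
    (hasLineDerivAt_sfun_efun_of_le hl le_rfl hx)
    (hasLineDerivAt_sfun_efun_of_lt (Nat.lt_succ_self l) x)
  refine HasDerivAt.congr_deriv this ?_
  have hc := sq_cfun hl hx
  have ha : √(sfun n (l + 1) x / sfun n l x) / √(sfun n l x * sfun n (l + 1) x)
      = 1 / sfun n l x := by
    rw [Real.sqrt_div h1.le, Real.sqrt_mul h0.le]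
    have := Real.sq_sqrt h0.le
    field_simp
    exact this.symm
  rw [if_pos rfl, neg_div, ha]
  have : 2 * cfun n l x * sfun n (l + 1) x / sfun n (l + 1) x = 2 * cfun n l x := by field_simp
  rw [this]
  linear_combination -hc

/-- `e_{l+1}(c_i) = -c_l c_i` for `l < i`. -/
theorem hasLineDerivAt_cfun_efun_of_gt {n l i : ℕ} (hi : i < n) (hl : l < i)
    {x : EuclideanSpace ℝ (Fin (n + 1))} (hx : x ∈ Usph n) :
    HasLineDerivAt ℝ (cfun n i) (-(cfun n l x * cfun n i x)) x (efun n (l + 1) x) := by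
  have h0 := sfun_pos hi.le hx
  have h1 := sfun_pos (Nat.succ_le_of_lt hi) hx
  have := hasLineDerivAt_cfun hi hx (hasLineDerivAt_coordfun_efun hi.le x)
    (hasLineDerivAt_sfun_efun_of_lt hl x)
    (hasLineDerivAt_sfun_efun_of_lt (hl.trans (Nat.lt_succ_self i)) x)
  refine HasDerivAt.congr_deriv this ?_
  rw [if_neg hl.ne', if_pos hl, mul_div_cancel_right₀ _ h0.ne', mul_div_cancel_right₀ _ h1.ne',
    mul_div_assoc, ← cfun]
  ring

theorem hasLineDerivAt_sqrt_div {n j : ℕ} (hj : j < n) {x v : EuclideanSpace ℝ (Fin (n + 1))}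
    (hx : x ∈ Usph n) {c : ℝ} (hb : HasLineDerivAt ℝ (sfun n j) (c * sfun n j x) x v)
    (hd : HasLineDerivAt ℝ (sfun n (j + 1)) (c * sfun n (j + 1) x) x v) :
    HasLineDerivAt ℝ (fun y => Real.sqrt (sfun n (j + 1) y / sfun n j y)) 0 x v := by
  have h0 := sfun_pos hj.le hx
  have h1 := sfun_pos (Nat.succ_le_of_lt hj) hx
  have := (HasDerivAt.fun_div hd hb (by simpa using h0.ne')).sqrt
    (by simpa using (div_pos h1 h0).ne')
  refine this.congr_deriv ?_
  simp only [zero_smul, add_zero]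
  rw [show c * sfun n (j + 1) x * sfun n j x - sfun n (j + 1) x * (c * sfun n j x) = 0 by ring]
  simp

theorem hasLineDerivAt_toLp {E ι : Type*} [NormedAddCommGroup E] [NormedSpace ℝ E] [Fintype ι]
    {f : E → EuclideanSpace ℝ ι} {f' : EuclideanSpace ℝ ι} {x v : E}
    (h : ∀ r, HasLineDerivAt ℝ (fun y => f y r) (f' r) x v) : HasLineDerivAt ℝ f f' x v :=
  (EuclideanSpace.equiv ι ℝ).symm.toContinuousLinearMap.hasFDerivAt.comp_hasDerivAt (0 : ℝ)
    (hasDerivAt_pi.2 h)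

/-- `D_{e_{k+1}} e_{l+1} = c_l e_{k+1}` for `l < k`. -/
theorem hasLineDerivAt_efun_efun_of_lt {n l k : ℕ} (hk : k < n) (hl : l < k)
    {x : EuclideanSpace ℝ (Fin (n + 1))} (hx : x ∈ Usph n) :
    HasLineDerivAt ℝ (efun n (l + 1)) (cfun n l x • efun n (k + 1) x) x (efun n (k + 1) x) := by
  refine hasLineDerivAt_toLp fun r => ?_
  simp only [efun_apply n l, PiLp.smul_apply, smul_eq_mul]
  split_ifs with h h
  · have := hasLineDerivAt_sqrt_div (c := 0) (hl.trans hk) hx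
      (by simpa using hasLineDerivAt_sfun_efun_of_le hk hl.le hx)
      (by simpa using hasLineDerivAt_sfun_efun_of_le hk hl hx)
    rw [efun_apply, if_neg (by omega), if_neg (by omega), mul_zero]
    simpa [HasLineDerivAt] using HasDerivAt.fun_neg this
  · have := HasDerivAt.fun_mul (hasLineDerivAt_cfun_efun_of_lt hk hl hx)
      (hasLineDerivAt_apply x (efun n (k + 1) x) r)
    simpa [HasLineDerivAt] using this
  · rw [efun_apply, if_neg (by omega), if_neg (by omega), mul_zero]
    exact hasDerivAt_const _ _

/-- `D_{e_{l+1}} e_{k+1} = 0` for `l < k`. -/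
theorem hasLineDerivAt_efun_efun_of_gt {n l k : ℕ} (hk : k < n) (hl : l < k)
    {x : EuclideanSpace ℝ (Fin (n + 1))} (hx : x ∈ Usph n) :
    HasLineDerivAt ℝ (efun n (k + 1)) 0 x (efun n (l + 1) x) := by
  refine hasLineDerivAt_toLp fun r => ?_
  simp only [efun_apply n k]
  split_ifs with h h
  · have := hasLineDerivAt_sqrt_div hk hx (hasLineDerivAt_sfun_efun_of_lt hl x)
      (hasLineDerivAt_sfun_efun_of_lt (hl.trans (Nat.lt_succ_self k)) x)
    simpa [HasLineDerivAt] using HasDerivAt.fun_neg this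
  · have := HasDerivAt.fun_mul (hasLineDerivAt_cfun_efun_of_gt hk hl hx)
      (hasLineDerivAt_apply x (efun n (l + 1) x) r)
    refine this.congr_deriv ?_
    rw [efun_apply, if_neg (by omega), if_pos (by omega)]
    simp only [zero_smul, add_zero, PiLp.zero_apply]
    ring
  · exact hasDerivAt_const _ _

/-- The skew-symmetric matrix `E_{i+1,k+1} - E_{k+1,i+1}`. -/
def skewE (n i k : ℕ) : Matrix (Fin n) (Fin n) ℝ :=
  Emat n (i + 1) (k + 1) - Emat n (k + 1) (i + 1)

theorem Emat_mul_Emat {n a b c d : ℕ} (hb : b < n) :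
    Emat n (a + 1) (b + 1) * Emat n (c + 1) (d + 1)
      = if b = c then Emat n (a + 1) (d + 1) else 0 := by
  ext i j
  rw [Matrix.mul_apply, Finset.sum_eq_single ⟨b, hb⟩]
  · simp only [Emat, Matrix.of_apply]
    split_ifs <;> simp_all
  · intro r _ hr
    have : (r : ℕ) ≠ b := fun h => hr (Fin.ext h)
    simp [Emat, this]
  · simp

theorem skewE_bracket {n i j l k : ℕ} (hk : k < n) (hi : i < k) (hj : j < l) (hl : l < k) :
    skewE n i k * skewE n j l - skewE n j l * skewE n i k
      = (if j = i then skewE n l k else 0) + (if i = l then -skewE n j k else 0) := by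
  simp only [skewE, mul_sub, sub_mul]
  rw [Emat_mul_Emat (by omega), Emat_mul_Emat (by omega), Emat_mul_Emat (by omega),
    Emat_mul_Emat (by omega), Emat_mul_Emat (by omega), Emat_mul_Emat (by omega),
    Emat_mul_Emat (by omega), Emat_mul_Emat (by omega)]
  split_ifs <;> first | omega | (subst_vars; abel)

theorem sum_skewE_bracket {n l k : ℕ} (hk : k < n) (hl : l < k) (c : ℕ → ℝ) :
    (∑ i ∈ Finset.range k, c i • skewE n i k) * (∑ j ∈ Finset.range l, c j • skewE n j l)
      - (∑ j ∈ Finset.range l, c j • skewE n j l) * (∑ i ∈ Finset.range k, c i • skewE n i k)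
      = (∑ i ∈ Finset.range l, c i ^ 2) • skewE n l k
        - c l • ∑ j ∈ Finset.range l, c j • skewE n j k := by
  rw [Finset.sum_mul_sum, Finset.sum_mul_sum, Finset.sum_comm, ← Finset.sum_sub_distrib,
    Finset.sum_smul, Finset.smul_sum, ← Finset.sum_sub_distrib]
  refine Finset.sum_congr rfl fun j hj => ?_
  rw [← Finset.sum_sub_distrib]
  have hj' := Finset.mem_range.1 hj
  have : ∀ i ∈ Finset.range k, c i • skewE n i k * c j • skewE n j l
      - c j • skewE n j l * c i • skewE n i k
      = (if j = i then (c i * c j) • skewE n l k else 0)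
        + (if i = l then -((c i * c j) • skewE n j k) else 0) := by
    intro i hi
    rw [smul_mul_smul_comm, smul_mul_smul_comm, mul_comm (c j), ← smul_sub,
      skewE_bracket hk (Finset.mem_range.1 hi) hj' hl]
    split_ifs <;> simp
  rw [Finset.sum_congr rfl this, Finset.sum_add_distrib, Finset.sum_ite_eq, Finset.sum_ite_eq',
    if_pos (by grind), if_pos (by grind), smul_smul, sq, sub_eq_add_neg]

theorem skewE_mulVec_eps {n i k l : ℕ} (hl : l < n) :
    (skewE n i k).mulVec (eps n (l + 1)).ofLp = (if k = l then (eps n (i + 1)).ofLp else 0)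
      - (if i = l then (eps n (k + 1)).ofLp else 0) := by
  have hE : ∀ a b, (Emat n (a + 1) (b + 1)).mulVec (eps n (l + 1)).ofLp
      = if b = l then (eps n (a + 1)).ofLp else 0 := by
    intro a b
    ext r
    rw [Matrix.mulVec, dotProduct, Finset.sum_eq_single ⟨l, hl⟩]
    · simp only [Emat, eps, Matrix.of_apply]
      split_ifs <;> simp_all
    · intro s _ hs
      have : (s : ℕ) ≠ l := fun h => hs (Fin.ext h)
      simp [eps, this]
    · simp
  rw [skewE, Matrix.sub_mulVec, hE, hE]

theorem Xfield_succ (n k : ℕ) (p : Conf n) :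
    Xfield n (k + 1) p = (efun n (k + 1) p.1, WithLp.toLp 2 (p.2.2.mulVec (eps n (k + 1)).ofLp),
      -∑ i ∈ Finset.range k, cfun n i p.1 • (p.2.2 * skewE n i k)) := by
  rw [Xfield, add_tsub_cancel_right, Finset.range_eq_Ico,
    show Finset.Icc 1 k = Finset.Ico (0 + 1) (k + 1) from rfl, ← Finset.sum_Ico_add']
  rfl

theorem differentiableAt_sfun {n : ℕ} (j : ℕ) (x : EuclideanSpace ℝ (Fin (n + 1))) :
    DifferentiableAt ℝ (sfun n j) x := by
  refine DifferentiableAt.fun_sum fun r _ => ?_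
  split_ifs <;> fun_prop

theorem differentiableAt_cfun {n i : ℕ} (hi : i < n) {x : EuclideanSpace ℝ (Fin (n + 1))}
    (hx : x ∈ Usph n) : DifferentiableAt ℝ (cfun n i) x := by
  have hq : 0 < sfun n i x * sfun n (i + 1) x := mul_pos (sfun_pos hi.le hx) (sfun_pos hi hx)
  have hc : DifferentiableAt ℝ (fun y => coordfun n y i) x := by
    simp only [coordfun, show i < n + 1 by omega, dite_true]
    fun_prop
  have hs : DifferentiableAt ℝ (fun y => Real.sqrt (sfun n i y * sfun n (i + 1) y)) x :=
    ((differentiableAt_sfun _ _).fun_mul (differentiableAt_sfun _ _)).sqrt hq.ne'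
  exact hc.mul (hs.inv (Real.sqrt_pos.2 hq).ne')

theorem differentiableAt_efun {n j : ℕ} (hj : j < n) {x : EuclideanSpace ℝ (Fin (n + 1))}
    (hx : x ∈ Usph n) : DifferentiableAt ℝ (efun n (j + 1)) x := by
  refine differentiableAt_euclidean.2 fun r => ?_
  have hc := differentiableAt_cfun hj hx
  have h0 := sfun_pos hj.le hx
  have h1 := sfun_pos (Nat.succ_le_of_lt hj) hx
  simp only [efun_apply]
  split_ifs
  · exact (((differentiableAt_sfun (j + 1) x).mul
      ((differentiableAt_sfun j x).inv h0.ne')).sqrt (div_pos h1 h0).ne').fun_neg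
  · fun_prop
  · fun_prop

theorem differentiableAt_Xfield {n k : ℕ} (hk : k < n) {p : Conf n} (hp : p.1 ∈ Usph n) :
    DifferentiableAt ℝ (Xfield n (k + 1)) p := by
  have hA : DifferentiableAt ℝ (fun q : Conf n => q.2.2) p := by fun_prop
  rw [show Xfield n (k + 1) = _ from funext (Xfield_succ n k)]
  refine ((differentiableAt_efun hk hp).comp p differentiableAt_fst).prodMk
    (DifferentiableAt.prodMk ?_ ?_)
  · exact ((WithLp.linearEquiv 2 ℝ (Fin n → ℝ)).symm.toLinearMap ∘ₗ
      (Matrix.mulVecBilin ℝ ℝ).flip (eps n (k + 1)).ofLp).toContinuousLinearMap.differentiableAt.comp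
        p hA
  · refine (DifferentiableAt.fun_sum fun i hi => ?_).fun_neg
    refine ((differentiableAt_cfun ?_ hp).comp p differentiableAt_fst).fun_smul
      ((LinearMap.mulRight ℝ (skewE n i k)).toContinuousLinearMap.differentiableAt.comp p hA)
    grind

theorem hasLineDerivAt_Xfield {n k : ℕ} {p v : Conf n} {de : EuclideanSpace ℝ (Fin (n + 1))}
    (he : HasLineDerivAt ℝ (efun n (k + 1)) de p.1 v.1) {dc : ℕ → ℝ}
    (hc : ∀ i < k, HasLineDerivAt ℝ (cfun n i) (dc i) p.1 v.1) :
    HasLineDerivAt ℝ (Xfield n (k + 1)) (de, WithLp.toLp 2 (v.2.2.mulVec (eps n (k + 1)).ofLp),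
      -∑ i ∈ Finset.range k,
        (dc i • (p.2.2 * skewE n i k) + cfun n i p.1 • (v.2.2 * skewE n i k))) p v := by
  rw [show Xfield n (k + 1) = _ from funext (Xfield_succ n k)]
  refine HasDerivAt.prodMk he (HasDerivAt.prodMk ?_ ?_)
  · have := ((hasDerivAt_id (0 : ℝ)).smul_const
      (WithLp.toLp 2 (v.2.2.mulVec (eps n (k + 1)).ofLp))).const_add
        (WithLp.toLp 2 (p.2.2.mulVec (eps n (k + 1)).ofLp))
    simpa [Matrix.add_mulVec, Matrix.smul_mulVec] using this
  · refine (HasDerivAt.fun_sum fun i hi => ?_).fun_neg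
    have := ((hasDerivAt_id (0 : ℝ)).smul_const (v.2.2 * skewE n i k)).const_add
      (p.2.2 * skewE n i k)
    have := HasDerivAt.fun_smul (hc i (Finset.mem_range.1 hi)) this
    simpa [add_mul, add_comm] using this

theorem fderiv_Xfield {n k : ℕ} (hk : k < n) {p v : Conf n} (hp : p.1 ∈ Usph n)
    {de : EuclideanSpace ℝ (Fin (n + 1))}
    (he : HasLineDerivAt ℝ (efun n (k + 1)) de p.1 v.1) {dc : ℕ → ℝ}
    (hc : ∀ i < k, HasLineDerivAt ℝ (cfun n i) (dc i) p.1 v.1) :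
    fderiv ℝ (Xfield n (k + 1)) p v = (de, WithLp.toLp 2 (v.2.2.mulVec (eps n (k + 1)).ofLp),
      -∑ i ∈ Finset.range k,
        (dc i • (p.2.2 * skewE n i k) + cfun n i p.1 • (v.2.2 * skewE n i k))) :=
  (differentiableAt_Xfield hk hp).lineDeriv_eq_fderiv.symm.trans
    (hasLineDerivAt_Xfield he hc).lineDeriv

theorem sum_smul_mul_skewE {n : ℕ} (c : ℕ → ℝ) (M : Matrix (Fin n) (Fin n) ℝ) (m : ℕ) :
    ∑ i ∈ Finset.range m, c i • (M * skewE n i m)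
      = M * ∑ i ∈ Finset.range m, c i • skewE n i m := by
  simp only [Finset.mul_sum, mul_smul_comm]

theorem sum_deriv_smul_skewE {n l k : ℕ} (hl : l < k) (c : ℕ → ℝ) (d : ℝ) :
    ∑ i ∈ Finset.range k, (if i < l then 0 else if i = l then d else -(c l * c i)) • skewE n i k
      = (d + c l ^ 2) • skewE n l k - c l • ∑ i ∈ Finset.range k, c i • skewE n i k
        + c l • ∑ i ∈ Finset.range l, c i • skewE n i k := by
  have hfil : Finset.range l = (Finset.range k).filter (· < l) := by
    ext i
    simp only [Finset.mem_range, Finset.mem_filter]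
    omega
  have hsingle : (d + c l ^ 2) • skewE n l k
      = ∑ i ∈ Finset.range k, if i = l then (d + c l ^ 2) • skewE n i k else 0 := by
    rw [Finset.sum_ite_eq', if_pos (Finset.mem_range.2 hl)]
  rw [hsingle, hfil, Finset.sum_filter, Finset.smul_sum, Finset.smul_sum,
    ← Finset.sum_sub_distrib, ← Finset.sum_add_distrib]
  refine Finset.sum_congr rfl fun i _ => ?_
  split_ifs with h h' h'
  · omega
  · simp
  · subst h'
    module
  · module

theorem sum_smul_skewE_mulVec_eps {n l m : ℕ} (hl : l < n) (hlm : l ≠ m) (c : ℕ → ℝ) :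
    (∑ i ∈ Finset.range m, c i • skewE n i m).mulVec (eps n (l + 1)).ofLp
      = if l < m then -(c l • (eps n (m + 1)).ofLp) else 0 := by
  rw [Matrix.sum_mulVec]
  simp only [Matrix.smul_mulVec, skewE_mulVec_eps hl, if_neg hlm.symm, zero_sub, smul_neg,
    smul_ite, smul_zero, Finset.sum_neg_distrib, Finset.sum_ite_eq', Finset.mem_range]
  split_ifs <;> simp

/-- For `1 ≤ l < k ≤ n` and every `p = (x, x̂, A) ∈ Ω` with `x ∈ S^n`,
`[X_k, X_l](p) = (x_{l−1} / √(s_{l−1}(x) s_l(x))) · X_k(p) − (0, 0, A(E_{lk} − E_{kl}))`. -/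
theorem statement8 (n l k : ℕ) (hl : 1 ≤ l) (hlk : l < k) (hk : k ≤ n)
    (p : Conf n) (hU : p.1 ∈ Usph n) (hS : p.1 ∈ sph n) :
    fderiv ℝ (Xfield n l) p (Xfield n k p) - fderiv ℝ (Xfield n k) p (Xfield n l p)
      = (coordfun n p.1 (l - 1) / Real.sqrt (sfun n (l - 1) p.1 * sfun n l p.1)) • Xfield n k p
        - Yfield n l k p := by
  obtain ⟨l, rfl⟩ : ∃ m, l = m + 1 := ⟨l - 1, by omega⟩
  obtain ⟨k, rfl⟩ : ∃ m, k = m + 1 := ⟨k - 1, by omega⟩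
  replace hlk : l < k := by omega
  replace hk : k < n := by omega
  have hln : l < n := hlk.trans hk
  have hs0 : sfun n 0 p.1 = 1 := by simpa [sfun, sph] using hS
  have hXk := fderiv_Xfield hln hU (v := Xfield n (k + 1) p)
    (by simpa only [Xfield_succ] using hasLineDerivAt_efun_efun_of_lt hk hlk hU)
    (dc := fun _ => 0)
    (by simpa only [Xfield_succ] using
      fun i hi => hasLineDerivAt_cfun_efun_of_lt hk (hi.trans hlk) hU)
  have hXl := fderiv_Xfield hk hU (v := Xfield n (l + 1) p)
    (by simpa only [Xfield_succ] using hasLineDerivAt_efun_efun_of_gt hk hlk hU)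
    (dc := fun i => if i < l then 0 else if i = l then -(1 / sfun n (l + 1) p.1)
      else -(cfun n l p.1 * cfun n i p.1))
    (by
      intro i hi
      simp only [Xfield_succ]
      split_ifs with h h'
      · exact hasLineDerivAt_cfun_efun_of_lt hln h hU
      · subst h'
        exact hasLineDerivAt_cfun_efun_self hln hU
      · exact hasLineDerivAt_cfun_efun_of_gt (hi.trans hk) (by omega) hU)
  rw [hXk, hXl]
  have hbr := sum_skewE_bracket hk hlk (fun i => cfun n i p.1)
  rw [sum_sq_cfun hln.le hU, hs0] at hbr
  have hsq := sq_cfun hln hU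
  change _ = cfun n l p.1 • Xfield n (k + 1) p - (0, 0, p.2.2 * skewE n l k)
  simp only [Xfield_succ, Finset.sum_add_distrib, sum_smul_mul_skewE]
  rw [sum_deriv_smul_skewE hlk (fun i => cfun n i p.1)]
  refine Prod.ext ?_ (Prod.ext ?_ ?_)
  · simp
  · ext i
    simp [Matrix.neg_mulVec, ← Matrix.mulVec_mulVec,
      sum_smul_skewE_mulVec_eps hln hlk.ne (fun i => cfun n i p.1),
      sum_smul_skewE_mulVec_eps hk hlk.ne' (fun i => cfun n i p.1), hlk, hlk.not_gt,
      Matrix.mulVec_neg, Matrix.mulVec_smul]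
  · simp only [Prod.snd_sub, Prod.smul_snd, zero_smul, Finset.sum_const_zero, mul_zero]
    set Bk := ∑ i ∈ Finset.range k, cfun n i p.1 • skewE n i k
    set Bl := ∑ i ∈ Finset.range l, cfun n i p.1 • skewE n i l
    rw [show -(1 / sfun n (l + 1) p.1) + cfun n l p.1 ^ 2 = -(1 / sfun n l p.1) by
      rw [hsq]; ring]
    have hA := congrArg (p.2.2 * ·) hbr
    simp only [mul_sub, mul_add, mul_smul_comm, neg_mul, ← mul_assoc] at hA ⊢
    rw [sub_eq_iff_eq_add] at hA
    rw [hA]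
    module
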